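/- Let B be a bialgebra over K. For all p, q ≥ 1 the vertical differentials satisfy δ_c^{p+1,q} ∘ δ_c^{p,q} = 0, where δ_c^{p,q} : Hom(B^{⊗q}, B^{⊗p}) → Hom(B^{⊗q}, B^{⊗p+1}) is given by δ_c^{p,q}(f) = (Id ⊗ f) ∘ σ^q + Σ_{j=1}^{p} (−1)^j Δ_j^p ∘ f + (−1)^{p+1} (f ⊗ Id) ∘ τ^q. -/

import Mathlib

open TensorProduct

namespace GBD

variable (K B : Type*) [Field K] [Ring B] [Bialgebra K B]

/-- The `n`-th tensor power `B^{⊗n}`. -/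
abbrev T (n : ℕ) := PiTensorProduct K (fun _ : Fin n => B)

/-- Splitting off the first tensor factor: `B^{⊗(n+1)} ≃ B ⊗ B^{⊗n}`. -/
noncomputable def split (n : ℕ) : T K B (n + 1) ≃ₗ[K] B ⊗[K] T K B n :=
  ((PiTensorProduct.reindex K (fun _ : Fin (n+1) => B)
      ((finCongr (Nat.add_comm 1 n)).symm.trans finSumFinEquiv.symm)).trans
    (PiTensorProduct.tmulEquiv K B).symm).trans
      (TensorProduct.congr (PiTensorProduct.subsingletonEquiv (0 : Fin 1))
        (LinearEquiv.refl K _))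

/-- Splitting off the last tensor factor: `B^{⊗(n+1)} ≃ B^{⊗n} ⊗ B`. -/
noncomputable def splitLast (n : ℕ) : T K B (n + 1) ≃ₗ[K] T K B n ⊗[K] B :=
  ((PiTensorProduct.reindex K (fun _ : Fin (n+1) => B) finSumFinEquiv.symm).trans
    (PiTensorProduct.tmulEquiv K B).symm).trans
      (TensorProduct.congr (LinearEquiv.refl K _)
        (PiTensorProduct.subsingletonEquiv (0 : Fin 1)))

/-- Iterated comultiplication `Δ^{(n)} : B → B^{⊗n}` (with `Δ^{(0)} = ε`, `Δ^{(1)} = Id`). -/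
noncomputable def iterComul : (n : ℕ) → (B →ₗ[K] T K B n)
  | 0 => (PiTensorProduct.isEmptyEquiv (Fin 0)).symm.toLinearMap ∘ₗ
      (Coalgebra.counit (R := K) (A := B))
  | (n + 1) => (split K B n).symm.toLinearMap ∘ₗ
      LinearMap.lTensor B (iterComul n) ∘ₗ (Coalgebra.comul (R := K) (A := B))

/-- Componentwise comultiplication `B^{⊗n} → B^{⊗n} ⊗ B^{⊗n}`,
`b¹⊗⋯⊗bⁿ ↦ (b¹₍₁₎⊗⋯⊗bⁿ₍₁₎) ⊗ (b¹₍₂₎⊗⋯⊗bⁿ₍₂₎)`. -/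
noncomputable def comulT : (n : ℕ) → (T K B n →ₗ[K] T K B n ⊗[K] T K B n)
  | 0 => (TensorProduct.congr (PiTensorProduct.isEmptyEquiv (Fin 0)).symm
        (PiTensorProduct.isEmptyEquiv (Fin 0)).symm).toLinearMap ∘ₗ
      (TensorProduct.lid K K).symm.toLinearMap ∘ₗ
        (PiTensorProduct.isEmptyEquiv (Fin 0)).toLinearMap
  | (n + 1) =>
      (TensorProduct.congr (split K B n).symm (split K B n).symm).toLinearMap ∘ₗ
        (TensorProduct.tensorTensorTensorComm K B B (T K B n) (T K B n)).toLinearMap ∘ₗ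
          TensorProduct.map (Coalgebra.comul (R := K) (A := B)) (comulT n) ∘ₗ
            (split K B n).toLinearMap

/-- The product of all tensor factors, `B^{⊗n} → B`, `b¹⊗⋯⊗bⁿ ↦ b¹⋯bⁿ`. -/
noncomputable def prodT (n : ℕ) : T K B n →ₗ[K] B :=
  PiTensorProduct.lift (MultilinearMap.mkPiAlgebraFin K n B)

/-- `μ_i : B^{⊗(q+1)} → B^{⊗q}` multiplying the `i`-th and `(i+1)`-th factors
(`i` is 0-indexed here). -/
noncomputable def mulAt : (q : ℕ) → ℕ → (T K B (q + 1) →ₗ[K] T K B q)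
  | 0, _ => 0
  | (q + 1), 0 => (split K B q).symm.toLinearMap ∘ₗ
      LinearMap.rTensor (T K B q) (LinearMap.mul' K B) ∘ₗ
        (TensorProduct.assoc K B B (T K B q)).symm.toLinearMap ∘ₗ
          LinearMap.lTensor B (split K B q).toLinearMap ∘ₗ
            (split K B (q + 1)).toLinearMap
  | (q + 1), (i + 1) => (split K B q).symm.toLinearMap ∘ₗ
      LinearMap.lTensor B (mulAt q i) ∘ₗ (split K B (q + 1)).toLinearMap

/-- `Δ_j : B^{⊗p} → B^{⊗(p+1)}` applying `Δ` to the `j`-th factor (`j` is 0-indexed). -/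
noncomputable def comulAt : (p : ℕ) → ℕ → (T K B p →ₗ[K] T K B (p + 1))
  | 0, _ => 0
  | (p + 1), 0 => (split K B (p + 1)).symm.toLinearMap ∘ₗ
      LinearMap.lTensor B (split K B p).symm.toLinearMap ∘ₗ
        (TensorProduct.assoc K B B (T K B p)).toLinearMap ∘ₗ
          LinearMap.rTensor (T K B p) (Coalgebra.comul (R := K) (A := B)) ∘ₗ
            (split K B p).toLinearMap
  | (p + 1), (i + 1) => (split K B (p + 1)).symm.toLinearMap ∘ₗ
      LinearMap.lTensor B (comulAt p i) ∘ₗ (split K B p).toLinearMap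

/-- `λ^p : B^{⊗(p+1)} → B^{⊗p}`, `b¹⊗b²⊗⋯⊗b^{p+1} ↦ b¹₍₁₎b² ⊗ ⋯ ⊗ b¹₍ₚ₎b^{p+1}`. -/
noncomputable def lamMap (p : ℕ) : T K B (p + 1) →ₗ[K] T K B p :=
  LinearMap.mul' K (T K B p) ∘ₗ TensorProduct.map (iterComul K B p) LinearMap.id ∘ₗ
    (split K B p).toLinearMap

/-- `ρ^p : B^{⊗(p+1)} → B^{⊗p}`, `b¹⊗⋯⊗b^p⊗b^{p+1} ↦ b¹b^{p+1}₍₁₎ ⊗ ⋯ ⊗ b^p b^{p+1}₍ₚ₎`. -/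
noncomputable def rhoMap (p : ℕ) : T K B (p + 1) →ₗ[K] T K B p :=
  LinearMap.mul' K (T K B p) ∘ₗ TensorProduct.map LinearMap.id (iterComul K B p) ∘ₗ
    (splitLast K B p).toLinearMap

/-- `σ^q : B^{⊗q} → B^{⊗(q+1)}`, `b¹⊗⋯⊗b^q ↦ (b¹₍₁₎⋯b^q₍₁₎) ⊗ b¹₍₂₎ ⊗ ⋯ ⊗ b^q₍₂₎`. -/
noncomputable def sigmaMap (q : ℕ) : T K B q →ₗ[K] T K B (q + 1) :=
  (split K B q).symm.toLinearMap ∘ₗ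
    TensorProduct.map (prodT K B q) LinearMap.id ∘ₗ comulT K B q

/-- `τ^q : B^{⊗q} → B^{⊗(q+1)}`, `b¹⊗⋯⊗b^q ↦ b¹₍₁₎ ⊗ ⋯ ⊗ b^q₍₁₎ ⊗ (b¹₍₂₎⋯b^q₍₂₎)`. -/
noncomputable def tauMap (q : ℕ) : T K B q →ₗ[K] T K B (q + 1) :=
  (splitLast K B q).symm.toLinearMap ∘ₗ
    TensorProduct.map LinearMap.id (prodT K B q) ∘ₗ comulT K B q

/-- The horizontal (Hochschild-type) differential
`δ_h^{p,q} : Hom(B^{⊗q}, B^{⊗p}) → Hom(B^{⊗(q+1)}, B^{⊗p})`. -/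
noncomputable def deltaH (p q : ℕ) (f : T K B q →ₗ[K] T K B p) :
    T K B (q + 1) →ₗ[K] T K B p :=
  lamMap K B p ∘ₗ (split K B p).symm.toLinearMap ∘ₗ LinearMap.lTensor B f ∘ₗ
      (split K B q).toLinearMap
    + ∑ i ∈ Finset.range q, ((-1 : ℤ) ^ (i + 1)) • (f ∘ₗ mulAt K B q i)
    + ((-1 : ℤ) ^ (q + 1)) •
        (rhoMap K B p ∘ₗ (splitLast K B p).symm.toLinearMap ∘ₗ LinearMap.rTensor B f ∘ₗ
          (splitLast K B q).toLinearMap)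

/-- The vertical (coHochschild-type) differential
`δ_c^{p,q} : Hom(B^{⊗q}, B^{⊗p}) → Hom(B^{⊗q}, B^{⊗(p+1)})`. -/
noncomputable def deltaCv (p q : ℕ) (f : T K B q →ₗ[K] T K B p) :
    T K B q →ₗ[K] T K B (p + 1) :=
  (split K B p).symm.toLinearMap ∘ₗ LinearMap.lTensor B f ∘ₗ (split K B q).toLinearMap ∘ₗ
      sigmaMap K B q
    + ∑ j ∈ Finset.range p, ((-1 : ℤ) ^ (j + 1)) • (comulAt K B p j ∘ₗ f)
    + ((-1 : ℤ) ^ (p + 1)) •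
        ((splitLast K B p).symm.toLinearMap ∘ₗ LinearMap.rTensor B f ∘ₗ
          (splitLast K B q).toLinearMap ∘ₗ tauMap K B q)


section Split

variable {K B}

lemma split_tprod (n : ℕ) (x : Fin (n + 1) → B) :
    split K B n (PiTensorProduct.tprod K x) =
      x 0 ⊗ₜ PiTensorProduct.tprod K (Fin.tail x) := by
  simp only [split, LinearEquiv.trans_apply, PiTensorProduct.reindex_tprod]
  erw [PiTensorProduct.tmulEquiv_symm_apply]
  simp
  rfl

lemma splitLast_tprod (n : ℕ) (x : Fin (n + 1) → B) :
    splitLast K B n (PiTensorProduct.tprod K x) =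
      PiTensorProduct.tprod K (Fin.init x) ⊗ₜ x (Fin.last n) := by
  simp only [splitLast, LinearEquiv.trans_apply, PiTensorProduct.reindex_tprod]
  erw [PiTensorProduct.tmulEquiv_symm_apply]
  simp
  rfl

lemma split_symm_tprod (n : ℕ) (b : B) (x : Fin n → B) :
    (split K B n).symm (b ⊗ₜ PiTensorProduct.tprod K x) =
      PiTensorProduct.tprod K (Fin.cons b x : Fin (n + 1) → B) := by
  rw [LinearEquiv.symm_apply_eq, split_tprod, Fin.cons_zero, Fin.tail_cons]

lemma splitLast_symm_tprod (n : ℕ) (b : B) (x : Fin n → B) :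
    (splitLast K B n).symm (PiTensorProduct.tprod K x ⊗ₜ b) =
      PiTensorProduct.tprod K (Fin.snoc x b : Fin (n + 1) → B) := by
  rw [LinearEquiv.symm_apply_eq, splitLast_tprod, Fin.init_snoc, Fin.snoc_last]

lemma split_symm_splitLast_symm (n : ℕ) (b c : B) (t : T K B n) :
    (split K B (n + 1)).symm (b ⊗ₜ (splitLast K B n).symm (t ⊗ₜ c)) =
      (splitLast K B (n + 1)).symm ((split K B n).symm (b ⊗ₜ t) ⊗ₜ c) := by
  induction t using PiTensorProduct.induction_on with
  | smul_tprod r x =>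
    simp only [TensorProduct.tmul_smul, ← TensorProduct.smul_tmul', map_smul,
      split_symm_tprod, splitLast_symm_tprod, Fin.cons_snoc_eq_snoc_cons]
  | add x y hx hy => simp only [TensorProduct.tmul_add, TensorProduct.add_tmul, map_add, hx, hy]

lemma prodT_split_symm (n : ℕ) (b : B) (t : T K B n) :
    prodT K B (n + 1) ((split K B n).symm (b ⊗ₜ t)) = b * prodT K B n t := by
  induction t using PiTensorProduct.induction_on with
  | smul_tprod r x =>
    simp only [TensorProduct.tmul_smul, map_smul, split_symm_tprod, mul_smul_comm]
    simp [prodT, MultilinearMap.mkPiAlgebraFin_apply, List.ofFn_succ]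
  | add x y hx hy => simp only [TensorProduct.tmul_add, map_add, hx, hy, mul_add]

/-- To prove a property of all elements of `B^{⊗(n+1)}`, it suffices to treat `b ⊗ t`. -/
lemma split_induction {n : ℕ} {P : T K B (n + 1) → Prop}
    (tmul : ∀ b t, P ((split K B n).symm (b ⊗ₜ t)))
    (add : ∀ x y, P x → P y → P (x + y)) (t : T K B (n + 1)) : P t := by
  obtain ⟨t, rfl⟩ := (split K B n).symm.surjective t
  induction t using TensorProduct.induction_on with
  | zero => simpa using tmul 0 0
  | tmul b t => exact tmul b t
  | add x y hx hy => rw [map_add]; exact add _ _ hx hy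

end Split

section Coassoc

variable {K}
variable {C D : Type*} [AddCommGroup C] [Module K C] [AddCommGroup D] [Module K D]

/-- The componentwise comultiplication on a tensor product of two (not necessarily counital)
coalgebras. -/
noncomputable def tensorComul (δ : C →ₗ[K] C ⊗[K] C) (ε : D →ₗ[K] D ⊗[K] D) :
    C ⊗[K] D →ₗ[K] (C ⊗[K] D) ⊗[K] (C ⊗[K] D) :=
  (TensorProduct.tensorTensorTensorComm K C C D D).toLinearMap ∘ₗ TensorProduct.map δ ε

lemma assoc_rTensor_tensorComul (δ : C →ₗ[K] C ⊗[K] C) (ε : D →ₗ[K] D ⊗[K] D)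
    (u : C ⊗[K] C) (v : D ⊗[K] D) :
    TensorProduct.assoc K _ _ _ (LinearMap.rTensor _ (tensorComul δ ε)
        (TensorProduct.tensorTensorTensorComm K C C D D (u ⊗ₜ v))) =
      LinearMap.lTensor _ (TensorProduct.tensorTensorTensorComm K C C D D).toLinearMap
        (TensorProduct.tensorTensorTensorComm K C (C ⊗[K] C) D (D ⊗[K] D)
          (TensorProduct.assoc K _ _ _ (LinearMap.rTensor _ δ u) ⊗ₜ
            TensorProduct.assoc K _ _ _ (LinearMap.rTensor _ ε v))) := by
  induction u using TensorProduct.induction_on with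
  | zero => simp
  | add x y hx hy => simp only [TensorProduct.add_tmul, map_add, hx, hy]
  | tmul c c' =>
    induction v using TensorProduct.induction_on with
    | zero => simp
    | add x y hx hy => simp only [TensorProduct.tmul_add, map_add, hx, hy]
    | tmul d d' =>
      simp only [TensorProduct.tensorTensorTensorComm_tmul, LinearMap.rTensor_tmul, tensorComul,
        LinearMap.comp_apply, TensorProduct.map_tmul, LinearEquiv.coe_coe]
      generalize δ c = u
      generalize ε d = v
      induction u using TensorProduct.induction_on with
      | zero => simp
      | add x y hx hy => simp only [TensorProduct.add_tmul, map_add, hx, hy]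
      | tmul a a' =>
        induction v using TensorProduct.induction_on with
        | zero => simp
        | add x y hx hy => simp only [TensorProduct.tmul_add, TensorProduct.add_tmul, map_add, hx, hy]
        | tmul b b' => simp

lemma lTensor_tensorComul (δ : C →ₗ[K] C ⊗[K] C) (ε : D →ₗ[K] D ⊗[K] D)
    (u : C ⊗[K] C) (v : D ⊗[K] D) :
    LinearMap.lTensor _ (tensorComul δ ε)
        (TensorProduct.tensorTensorTensorComm K C C D D (u ⊗ₜ v)) =
      LinearMap.lTensor _ (TensorProduct.tensorTensorTensorComm K C C D D).toLinearMap
        (TensorProduct.tensorTensorTensorComm K C (C ⊗[K] C) D (D ⊗[K] D)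
          (LinearMap.lTensor _ δ u ⊗ₜ LinearMap.lTensor _ ε v)) := by
  induction u using TensorProduct.induction_on with
  | zero => simp
  | add x y hx hy => simp only [TensorProduct.add_tmul, map_add, hx, hy]
  | tmul c c' =>
    induction v using TensorProduct.induction_on with
    | zero => simp
    | add x y hx hy => simp only [TensorProduct.tmul_add, map_add, hx, hy]
    | tmul d d' => simp [tensorComul]

lemma tensorComul_coassoc {δ : C →ₗ[K] C ⊗[K] C} {ε : D →ₗ[K] D ⊗[K] D}
    (hδ : ∀ c, TensorProduct.assoc K _ _ _ (LinearMap.rTensor _ δ (δ c)) =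
      LinearMap.lTensor _ δ (δ c))
    (hε : ∀ d, TensorProduct.assoc K _ _ _ (LinearMap.rTensor _ ε (ε d)) =
      LinearMap.lTensor _ ε (ε d)) (t : C ⊗[K] D) :
    TensorProduct.assoc K _ _ _ (LinearMap.rTensor _ (tensorComul δ ε) (tensorComul δ ε t)) =
      LinearMap.lTensor _ (tensorComul δ ε) (tensorComul δ ε t) := by
  induction t using TensorProduct.induction_on with
  | zero => simp
  | add x y hx hy => simp only [map_add, hx, hy]
  | tmul c d =>
    have h : tensorComul δ ε (c ⊗ₜ d) =
      TensorProduct.tensorTensorTensorComm K C C D D (δ c ⊗ₜ ε d) := rfl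
    rw [h, assoc_rTensor_tensorComul, lTensor_tensorComul, hδ, hε]

/-- Coassociativity is transported along a linear equivalence. -/
lemma coassoc_congr (e : D ≃ₗ[K] C) {δ : C →ₗ[K] C ⊗[K] C}
    (hδ : ∀ c, TensorProduct.assoc K _ _ _ (LinearMap.rTensor _ δ (δ c)) =
      LinearMap.lTensor _ δ (δ c))
    {ε : D →ₗ[K] D ⊗[K] D}
    (hε : ∀ d, ε d = TensorProduct.map e.symm.toLinearMap e.symm.toLinearMap (δ (e d))) (d : D) :
    TensorProduct.assoc K _ _ _ (LinearMap.rTensor _ ε (ε d)) =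
      LinearMap.lTensor _ ε (ε d) := by
  have hr : ∀ u : C ⊗[K] C, TensorProduct.assoc K _ _ _ (LinearMap.rTensor _ ε
      (TensorProduct.map e.symm.toLinearMap e.symm.toLinearMap u)) =
      TensorProduct.map e.symm.toLinearMap
        (TensorProduct.map e.symm.toLinearMap e.symm.toLinearMap)
        (TensorProduct.assoc K _ _ _ (LinearMap.rTensor _ δ u)) := fun u => by
    induction u using TensorProduct.induction_on with
    | zero => simp
    | add x y hx hy => simp only [map_add, hx, hy]
    | tmul c c' =>
      simp only [TensorProduct.map_tmul, LinearMap.rTensor_tmul, hε, LinearEquiv.coe_coe,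
        LinearEquiv.apply_symm_apply]
      generalize δ c = v
      induction v using TensorProduct.induction_on with
      | zero => simp
      | add x y hx hy => simp only [TensorProduct.add_tmul, map_add, hx, hy]
      | tmul a a' => simp
  have hl : ∀ u : C ⊗[K] C, LinearMap.lTensor _ ε
      (TensorProduct.map e.symm.toLinearMap e.symm.toLinearMap u) =
      TensorProduct.map e.symm.toLinearMap
        (TensorProduct.map e.symm.toLinearMap e.symm.toLinearMap)
        (LinearMap.lTensor _ δ u) := fun u => by
    induction u using TensorProduct.induction_on with
    | zero => simp
    | add x y hx hy => simp only [map_add, hx, hy]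
    | tmul c c' => simp [hε]
  rw [hε d, hr, hl, hδ]

lemma comulT_coassoc (n : ℕ) (t : T K B n) :
    TensorProduct.assoc K _ _ _ (LinearMap.rTensor _ (comulT K B n) (comulT K B n t)) =
      LinearMap.lTensor _ (comulT K B n) (comulT K B n t) := by
  induction n with
  | zero =>
    refine coassoc_congr (δ := (TensorProduct.lid K K).symm.toLinearMap)
      (PiTensorProduct.isEmptyEquiv (Fin 0)) (fun c => ?_) (fun d => rfl) t
    simp
  | succ n ih =>
    exact coassoc_congr (split K B n)
      (tensorComul_coassoc (δ := Coalgebra.comul) Coalgebra.coassoc_apply ih) (fun d => rfl) t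

end Coassoc

section Coaction

variable {K B}
variable {C D : Type*} [AddCommGroup C] [Module K C] [AddCommGroup D] [Module K D]

lemma map_congr_tensorTensorTensorComm (e : D ≃ₗ[K] B ⊗[K] C) (π : C →ₗ[K] B) (ϖ : D →ₗ[K] B)
    (h : ∀ b c, ϖ (e.symm (b ⊗ₜ c)) = b * π c) (u : B ⊗[K] B) (v : C ⊗[K] C) :
    TensorProduct.map ϖ ϖ (TensorProduct.congr e.symm e.symm
      (TensorProduct.tensorTensorTensorComm K B B C C (u ⊗ₜ v))) =
      u * TensorProduct.map π π v := by
  induction u using TensorProduct.induction_on with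
  | zero => simp
  | add x y hx hy => simp only [TensorProduct.add_tmul, map_add, hx, hy, add_mul]
  | tmul a a' =>
    induction v using TensorProduct.induction_on with
    | zero => simp
    | add x y hx hy => simp only [TensorProduct.tmul_add, map_add, hx, hy, mul_add]
    | tmul c c' => simp [h]

lemma map_prodT_comulT (n : ℕ) (t : T K B n) :
    TensorProduct.map (prodT K B n) (prodT K B n) (comulT K B n t) =
      Coalgebra.comul (R := K) (prodT K B n t) := by
  induction n with
  | zero =>
    induction t using PiTensorProduct.induction_on with
    | smul_tprod r x =>
      simp [comulT, prodT, Algebra.TensorProduct.one_def]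
    | add x y hx hy => simp only [map_add, hx, hy]
  | succ n ih =>
    induction t using split_induction with
    | add x y hx hy => simp only [map_add, hx, hy]
    | tmul b t =>
      rw [prodT_split_symm, Bialgebra.comul_mul, ← ih,
        ← map_congr_tensorTensorTensorComm (split K B n) _ _ (prodT_split_symm n)]
      simp only [comulT, LinearMap.comp_apply, LinearEquiv.coe_coe, LinearEquiv.apply_symm_apply,
        TensorProduct.map_tmul]

/-- The left `B`-coaction induced by a map `π : C → B` on a coalgebra `C`. -/
noncomputable def coactL (δ : C →ₗ[K] C ⊗[K] C) (π : C →ₗ[K] B) : C →ₗ[K] B ⊗[K] C :=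
  LinearMap.rTensor _ π ∘ₗ δ

/-- The right `B`-coaction induced by a map `π : C → B` on a coalgebra `C`. -/
noncomputable def coactR (δ : C →ₗ[K] C ⊗[K] C) (π : C →ₗ[K] B) : C →ₗ[K] C ⊗[K] B :=
  LinearMap.lTensor _ π ∘ₗ δ

variable {δ : C →ₗ[K] C ⊗[K] C} {π : C →ₗ[K] B}

lemma coactL_coassoc
    (hδ : ∀ c, TensorProduct.assoc K _ _ _ (LinearMap.rTensor _ δ (δ c)) =
      LinearMap.lTensor _ δ (δ c))
    (hπ : ∀ c, TensorProduct.map π π (δ c) = Coalgebra.comul (R := K) (π c)) (t : C) :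
    TensorProduct.assoc K _ _ _ (LinearMap.rTensor _ Coalgebra.comul (coactL δ π t)) =
      LinearMap.lTensor _ (coactL δ π) (coactL δ π t) := by
  have h := congrArg (TensorProduct.map π (LinearMap.rTensor _ π)) (hδ t)
  simp only [coactL, LinearMap.comp_apply]
  convert h using 1
  · generalize δ t = u
    induction u using TensorProduct.induction_on with
    | zero => simp
    | add x y hx hy => simp only [map_add, hx, hy]
    | tmul a a' =>
      simp only [LinearMap.rTensor_tmul, ← hπ]
      generalize δ a = v
      induction v using TensorProduct.induction_on with
      | zero => simp
      | add x y hx hy => simp only [map_add, TensorProduct.add_tmul, hx, hy]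
      | tmul c c' => simp
  · generalize δ t = u
    induction u using TensorProduct.induction_on with
    | zero => simp
    | add x y hx hy => simp only [map_add, hx, hy]
    | tmul a a' => simp

lemma coactR_coassoc
    (hδ : ∀ c, TensorProduct.assoc K _ _ _ (LinearMap.rTensor _ δ (δ c)) =
      LinearMap.lTensor _ δ (δ c))
    (hπ : ∀ c, TensorProduct.map π π (δ c) = Coalgebra.comul (R := K) (π c)) (t : C) :
    TensorProduct.assoc K _ _ _ (LinearMap.rTensor _ (coactR δ π) (coactR δ π t)) =
      LinearMap.lTensor _ Coalgebra.comul (coactR δ π t) := by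
  have h := congrArg (LinearMap.lTensor _ (TensorProduct.map π π)) (hδ t)
  simp only [coactR, LinearMap.comp_apply]
  convert h using 1
  · generalize δ t = u
    induction u using TensorProduct.induction_on with
    | zero => simp
    | add x y hx hy => simp only [map_add, hx, hy]
    | tmul a a' =>
      simp only [LinearMap.rTensor_tmul, LinearMap.lTensor_tmul, LinearMap.comp_apply]
      generalize δ a = v
      induction v using TensorProduct.induction_on with
      | zero => simp
      | add x y hx hy => simp only [map_add, TensorProduct.add_tmul, hx, hy]
      | tmul c c' => simp
  · generalize δ t = u
    induction u using TensorProduct.induction_on with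
    | zero => simp
    | add x y hx hy => simp only [map_add, hx, hy]
    | tmul a a' => simp [hπ]

lemma coactL_coactR_comm
    (hδ : ∀ c, TensorProduct.assoc K _ _ _ (LinearMap.rTensor _ δ (δ c)) =
      LinearMap.lTensor _ δ (δ c)) (t : C) :
    TensorProduct.assoc K _ _ _ (LinearMap.rTensor _ (coactL δ π) (coactR δ π t)) =
      LinearMap.lTensor _ (coactR δ π) (coactL δ π t) := by
  have h := congrArg (TensorProduct.map π (LinearMap.lTensor _ π)) (hδ t)
  simp only [coactL, coactR, LinearMap.comp_apply]
  convert h using 1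
  · generalize δ t = u
    induction u using TensorProduct.induction_on with
    | zero => simp
    | add x y hx hy => simp only [map_add, hx, hy]
    | tmul a a' =>
      simp only [LinearMap.rTensor_tmul, LinearMap.lTensor_tmul, LinearMap.comp_apply]
      generalize δ a = v
      induction v using TensorProduct.induction_on with
      | zero => simp
      | add x y hx hy => simp only [map_add, TensorProduct.add_tmul, hx, hy]
      | tmul c c' => simp
  · generalize δ t = u
    induction u using TensorProduct.induction_on with
    | zero => simp
    | add x y hx hy => simp only [map_add, hx, hy]
    | tmul a a' => simp

lemma split_sigmaMap (n : ℕ) (t : T K B n) :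
    split K B n (sigmaMap K B n t) = coactL (comulT K B n) (prodT K B n) t := by
  simp [sigmaMap, coactL, LinearMap.rTensor]

lemma splitLast_tauMap (n : ℕ) (t : T K B n) :
    splitLast K B n (tauMap K B n t) = coactR (comulT K B n) (prodT K B n) t := by
  simp [tauMap, coactR, LinearMap.lTensor]

/-- Maps that combine adding a factor on the left with adding one on the right commute as soon as
they do so on pure tensors. -/
lemma rTensor_lTensor_assoc_symm {P Q R S : Type*} [AddCommGroup P] [Module K P]
    [AddCommGroup Q] [Module K Q] [AddCommGroup R] [Module K R] [AddCommGroup S] [Module K S]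
    (f : C →ₗ[K] P) (g : B ⊗[K] P →ₗ[K] Q) (h : P ⊗[K] B →ₗ[K] R) (k : Q ⊗[K] B →ₗ[K] S)
    (l : B ⊗[K] R →ₗ[K] S) (hc : ∀ b p c, l (b ⊗ₜ h (p ⊗ₜ c)) = k (g (b ⊗ₜ p) ⊗ₜ c))
    (u : B ⊗[K] (C ⊗[K] B)) :
    k (LinearMap.rTensor B (g ∘ₗ LinearMap.lTensor B f) ((TensorProduct.assoc K _ _ _).symm u)) =
      l (LinearMap.lTensor B (h ∘ₗ LinearMap.rTensor B f) u) := by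
  induction u using TensorProduct.induction_on with
  | zero => simp
  | add x y hx hy => simp only [map_add, hx, hy]
  | tmul a s =>
    induction s using TensorProduct.induction_on with
    | zero => simp
    | add x y hx hy => simp only [map_add, TensorProduct.tmul_add, hx, hy]
    | tmul s c => simp [hc]

end Coaction

section ComulAt

variable {K B}

lemma rTensor_assoc_symm_congr {C D P Q S : Type*} [AddCommGroup C] [Module K C]
    [AddCommGroup D] [Module K D] [AddCommGroup P] [Module K P] [AddCommGroup Q] [Module K Q]
    [AddCommGroup S] [Module K S] (g : C ⊗[K] B →ₗ[K] P) (h : P ⊗[K] B →ₗ[K] S)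
    (g' : D ⊗[K] B →ₗ[K] Q) (h' : Q ⊗[K] B →ₗ[K] S) {c : C} {d : D}
    (H : ∀ a a', h (g (c ⊗ₜ a) ⊗ₜ a') = h' (g' (d ⊗ₜ a) ⊗ₜ a')) (u : B ⊗[K] B) :
    h (LinearMap.rTensor B g ((TensorProduct.assoc K C B B).symm (c ⊗ₜ u))) =
      h' (LinearMap.rTensor B g' ((TensorProduct.assoc K D B B).symm (d ⊗ₜ u))) := by
  induction u using TensorProduct.induction_on with
  | zero => simp
  | add x y hx hy => simp only [map_add, TensorProduct.tmul_add, hx, hy]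
  | tmul a a' => simp [H]

lemma comulAt_zero_split_symm (p : ℕ) (b : B) (t : T K B p) :
    comulAt K B (p + 1) 0 ((split K B p).symm (b ⊗ₜ t)) =
      (split K B (p + 1)).symm (LinearMap.lTensor B (split K B p).symm.toLinearMap
        (TensorProduct.assoc K B B (T K B p) (Coalgebra.comul (R := K) b ⊗ₜ t))) := by
  simp [comulAt]

lemma comulAt_succ_split_symm (p i : ℕ) (b : B) (t : T K B p) :
    comulAt K B (p + 1) (i + 1) ((split K B p).symm (b ⊗ₜ t)) =
      (split K B (p + 1)).symm (b ⊗ₜ comulAt K B p i t) := by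
  simp [comulAt]

lemma comulAt_comulAt (p i j : ℕ) (hij : i ≤ j) (t : T K B p) :
    comulAt K B (p + 1) (j + 1) (comulAt K B p i t) =
      comulAt K B (p + 1) i (comulAt K B p j t) := by
  induction p generalizing i j with
  | zero => simp [comulAt]
  | succ p ih =>
    induction t using split_induction with
    | add x y hx hy => simp only [map_add, hx, hy]
    | tmul b t =>
      obtain _ | i := i
      · obtain _ | j := j
        · have hl : ∀ u : B ⊗[K] B, comulAt K B (p + 2) 1 ((split K B (p + 1)).symm
              (LinearMap.lTensor B (split K B p).symm.toLinearMap
              (TensorProduct.assoc K B B (T K B p) (u ⊗ₜ t)))) =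
              (split K B (p + 2)).symm (LinearMap.lTensor B ((split K B (p + 1)).symm.toLinearMap ∘ₗ
                LinearMap.lTensor B ((split K B p).symm.toLinearMap ∘ₗ
                  (TensorProduct.mk K B (T K B p)).flip t))
                (LinearMap.lTensor B Coalgebra.comul u)) := fun u => by
            induction u using TensorProduct.induction_on with
            | zero => simp
            | add x y hx hy => simp only [map_add, TensorProduct.add_tmul, hx, hy]
            | tmul a a' =>
              simp only [TensorProduct.assoc_tmul, LinearMap.lTensor_tmul, LinearEquiv.coe_coe,
                comulAt_succ_split_symm, comulAt_zero_split_symm, LinearMap.comp_apply]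
              congr 3
              generalize Coalgebra.comul (R := K) a' = v
              induction v using TensorProduct.induction_on with
              | zero => simp
              | add x y hx hy => simp only [map_add, TensorProduct.add_tmul, hx, hy]
              | tmul c c' => simp
          have hr : ∀ u : B ⊗[K] B, comulAt K B (p + 2) 0 ((split K B (p + 1)).symm
              (LinearMap.lTensor B (split K B p).symm.toLinearMap
              (TensorProduct.assoc K B B (T K B p) (u ⊗ₜ t)))) =
              (split K B (p + 2)).symm (LinearMap.lTensor B ((split K B (p + 1)).symm.toLinearMap ∘ₗ
                LinearMap.lTensor B ((split K B p).symm.toLinearMap ∘ₗ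
                  (TensorProduct.mk K B (T K B p)).flip t))
                (TensorProduct.assoc K B B B (LinearMap.rTensor B Coalgebra.comul u))) := fun u => by
            induction u using TensorProduct.induction_on with
            | zero => simp
            | add x y hx hy => simp only [map_add, TensorProduct.add_tmul, hx, hy]
            | tmul a a' =>
              simp only [TensorProduct.assoc_tmul, LinearMap.lTensor_tmul, LinearEquiv.coe_coe,
                comulAt_zero_split_symm, LinearMap.rTensor_tmul]
              generalize Coalgebra.comul (R := K) a = v
              induction v using TensorProduct.induction_on with
              | zero => simp
              | add x y hx hy => simp only [map_add, TensorProduct.add_tmul, hx, hy]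
              | tmul c c' => simp
          rw [comulAt_zero_split_symm, hl, hr, Coalgebra.coassoc_apply]
        · rw [comulAt_zero_split_symm, comulAt_succ_split_symm, comulAt_zero_split_symm]
          generalize Coalgebra.comul (R := K) b = u
          induction u using TensorProduct.induction_on with
          | zero => simp
          | add x y hx hy => simp only [map_add, TensorProduct.add_tmul, hx, hy]
          | tmul a a' => simp [comulAt_succ_split_symm]
      · obtain _ | j := j
        · omega
        · simp only [comulAt_succ_split_symm, ih i j (by omega)]

lemma comulAt_splitLast_symm (p i : ℕ) (hi : i < p) (t : T K B p) (c : B) :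
    comulAt K B (p + 1) i ((splitLast K B p).symm (t ⊗ₜ c)) =
      (splitLast K B (p + 1)).symm (comulAt K B p i t ⊗ₜ c) := by
  induction p generalizing i with
  | zero => omega
  | succ p ih =>
    induction t using split_induction with
    | add x y hx hy => simp only [map_add, TensorProduct.add_tmul, hx, hy]
    | tmul b t =>
      rw [← split_symm_splitLast_symm]
      obtain _ | i := i
      · rw [comulAt_zero_split_symm, comulAt_zero_split_symm]
        generalize Coalgebra.comul (R := K) b = u
        induction u using TensorProduct.induction_on with
        | zero => simp
        | add x y hx hy => simp only [map_add, TensorProduct.add_tmul, hx, hy]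
        | tmul a a' => simp [split_symm_splitLast_symm]
      · rw [comulAt_succ_split_symm, ih i (by omega), comulAt_succ_split_symm,
          split_symm_splitLast_symm]

lemma comulAt_last_splitLast_symm (p : ℕ) (t : T K B p) (c : B) :
    comulAt K B (p + 1) p ((splitLast K B p).symm (t ⊗ₜ c)) =
      (splitLast K B (p + 1)).symm (LinearMap.rTensor B (splitLast K B p).symm.toLinearMap
        ((TensorProduct.assoc K (T K B p) B B).symm (t ⊗ₜ Coalgebra.comul (R := K) c))) := by
  induction p with
  | zero =>
    induction t using PiTensorProduct.induction_on with
    | add x y hx hy => simp only [map_add, TensorProduct.add_tmul, hx, hy]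
    | smul_tprod r x =>
      have h : ∀ a : B, (Fin.snoc x a : Fin 1 → B) = Fin.cons a x := fun a => by
        ext i; fin_cases i; rfl
      simp only [← TensorProduct.smul_tmul', map_smul, splitLast_symm_tprod, h]
      rw [← split_symm_tprod, comulAt_zero_split_symm]
      refine congrArg (r • ·) ?_
      generalize Coalgebra.comul (R := K) c = u
      induction u using TensorProduct.induction_on with
      | zero => simp only [TensorProduct.zero_tmul, TensorProduct.tmul_zero, map_zero]
      | add x y hx hy =>
        rw [TensorProduct.add_tmul, TensorProduct.tmul_add]
        simp only [map_add, hx, hy]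
      | tmul a a' =>
        simp only [TensorProduct.assoc_tmul, TensorProduct.assoc_symm_tmul, LinearMap.lTensor_tmul,
          LinearMap.rTensor_tmul, LinearEquiv.coe_coe, splitLast_symm_tprod, split_symm_tprod, h]
        rw [← h a', ← Fin.cons_snoc_eq_snoc_cons]
  | succ p ih =>
    induction t using split_induction with
    | add x y hx hy => simp only [map_add, TensorProduct.add_tmul, hx, hy]
    | tmul b t =>
      rw [← split_symm_splitLast_symm, comulAt_succ_split_symm, ih]
      exact rTensor_assoc_symm_congr (splitLast K B p).symm.toLinearMap
        ((split K B (p + 1 + 1)).symm.toLinearMap ∘ₗ TensorProduct.mk K B _ b ∘ₗ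
          (splitLast K B (p + 1)).symm.toLinearMap)
        (splitLast K B (p + 1)).symm.toLinearMap (splitLast K B (p + 1 + 1)).symm.toLinearMap
        (fun a a' => by simp [split_symm_splitLast_symm]) _

end ComulAt

section Coface

/-- The leftmost coface `f ↦ (Id ⊗ f) ∘ σ^q`. -/
noncomputable def cofaceL (p q : ℕ) :
    (T K B q →ₗ[K] T K B p) →ₗ[K] (T K B q →ₗ[K] T K B (p + 1)) where
  toFun f := (split K B p).symm.toLinearMap ∘ₗ LinearMap.lTensor B f ∘ₗ
    coactL (comulT K B q) (prodT K B q)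
  map_add' f g := by ext; simp [LinearMap.lTensor_add]
  map_smul' r f := by ext; simp [LinearMap.lTensor_smul]

/-- The rightmost coface `f ↦ (f ⊗ Id) ∘ τ^q`. -/
noncomputable def cofaceR (p q : ℕ) :
    (T K B q →ₗ[K] T K B p) →ₗ[K] (T K B q →ₗ[K] T K B (p + 1)) where
  toFun f := (splitLast K B p).symm.toLinearMap ∘ₗ LinearMap.rTensor B f ∘ₗ
    coactR (comulT K B q) (prodT K B q)
  map_add' f g := by ext; simp [LinearMap.rTensor_add]
  map_smul' r f := by ext; simp [LinearMap.rTensor_smul]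

/-- The cofaces `d^0, …, d^{p+1}` on `Hom(B^{⊗q}, B^{⊗p})`. -/
noncomputable def coface (p q i : ℕ) :
    (T K B q →ₗ[K] T K B p) →ₗ[K] (T K B q →ₗ[K] T K B (p + 1)) :=
  if i = 0 then cofaceL K B p q
  else if i ≤ p then LinearMap.compRight K (comulAt K B p (i - 1))
  else cofaceR K B p q

lemma deltaCv_eq_sum (p q : ℕ) (f : T K B q →ₗ[K] T K B p) :
    deltaCv K B p q f = ∑ i ∈ Finset.range (p + 2), ((-1 : ℤ) ^ i) • coface K B p q i f := by
  rw [Finset.sum_range_succ, Finset.sum_range_succ', deltaCv, add_comm (Finset.sum _ _)]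
  congr 1
  · congr 1
    · ext; simp [coface, cofaceL, split_sigmaMap]
    · refine Finset.sum_congr rfl fun i hi => ?_
      have : i + 1 ≤ p := Finset.mem_range.mp hi
      simp [coface, this]
  · congr 1
    ext; simp [coface, cofaceR, splitLast_tauMap]

variable {K B}

lemma comulAt_zero_cofaceL (p q : ℕ) (f : T K B q →ₗ[K] T K B p) :
    comulAt K B (p + 1) 0 ∘ₗ cofaceL K B p q f =
      cofaceL K B (p + 1) q (cofaceL K B p q f) := by
  refine LinearMap.ext fun t => ?_
  have hl : ∀ u : B ⊗[K] T K B q,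
      comulAt K B (p + 1) 0 ((split K B p).symm (LinearMap.lTensor B f u)) =
      (split K B (p + 1)).symm (LinearMap.lTensor B ((split K B p).symm.toLinearMap ∘ₗ
        LinearMap.lTensor B f)
        (TensorProduct.assoc K _ _ _ (LinearMap.rTensor _ Coalgebra.comul u))) := fun u => by
    induction u using TensorProduct.induction_on with
    | zero => simp
    | add x y hx hy => simp only [map_add, hx, hy]
    | tmul a s =>
      rw [LinearMap.lTensor_tmul, comulAt_zero_split_symm, LinearMap.rTensor_tmul]
      generalize Coalgebra.comul (R := K) a = v
      induction v using TensorProduct.induction_on with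
      | zero => simp
      | add x y hx hy => simp only [map_add, TensorProduct.add_tmul, hx, hy]
      | tmul c c' => simp
  have := hl (coactL (comulT K B q) (prodT K B q) t)
  rw [coactL_coassoc (comulT_coassoc B q) (map_prodT_comulT q),
    ← LinearMap.lTensor_comp_apply] at this
  exact this

lemma comulAt_succ_cofaceL (p q i : ℕ) (f : T K B q →ₗ[K] T K B p) :
    comulAt K B (p + 1) (i + 1) ∘ₗ cofaceL K B p q f =
      cofaceL K B (p + 1) q (comulAt K B p i ∘ₗ f) := by
  refine LinearMap.ext fun t => ?_
  simp only [cofaceL, LinearMap.coe_mk, AddHom.coe_mk, LinearMap.comp_apply, LinearEquiv.coe_coe]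
  generalize coactL (comulT K B q) (prodT K B q) t = u
  induction u using TensorProduct.induction_on with
  | zero => simp
  | add x y hx hy => simp only [map_add, hx, hy]
  | tmul a s => simp [comulAt_succ_split_symm]

lemma cofaceR_cofaceL (p q : ℕ) (f : T K B q →ₗ[K] T K B p) :
    cofaceR K B (p + 1) q (cofaceL K B p q f) = cofaceL K B (p + 1) q (cofaceR K B p q f) := by
  refine LinearMap.ext fun t => ?_
  have hr := rTensor_lTensor_assoc_symm f (split K B p).symm.toLinearMap
    (splitLast K B p).symm.toLinearMap (splitLast K B (p + 1)).symm.toLinearMap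
    (split K B (p + 1)).symm.toLinearMap (fun b t c => split_symm_splitLast_symm p b c t)
  have := hr (LinearMap.lTensor _ (coactR (comulT K B q) (prodT K B q))
    (coactL (comulT K B q) (prodT K B q) t))
  rw [← LinearMap.lTensor_comp_apply, ← coactL_coactR_comm (comulT_coassoc B q),
    LinearEquiv.symm_apply_apply,
    ← LinearMap.rTensor_comp_apply] at this
  exact this

lemma cofaceR_comulAt (p q i : ℕ) (hi : i < p) (f : T K B q →ₗ[K] T K B p) :
    cofaceR K B (p + 1) q (comulAt K B p i ∘ₗ f) =
      comulAt K B (p + 1) i ∘ₗ cofaceR K B p q f := by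
  refine LinearMap.ext fun t => ?_
  simp only [cofaceR, LinearMap.coe_mk, AddHom.coe_mk, LinearMap.comp_apply, LinearEquiv.coe_coe]
  generalize coactR (comulT K B q) (prodT K B q) t = u
  induction u using TensorProduct.induction_on with
  | zero => simp
  | add x y hx hy => simp only [map_add, hx, hy]
  | tmul s a => simp [comulAt_splitLast_symm p i hi]

lemma comulAt_last_cofaceR (p q : ℕ) (f : T K B q →ₗ[K] T K B p) :
    cofaceR K B (p + 1) q (cofaceR K B p q f) =
      comulAt K B (p + 1) p ∘ₗ cofaceR K B p q f := by
  refine LinearMap.ext fun t => ?_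
  have hl : ∀ u : T K B q ⊗[K] B,
      comulAt K B (p + 1) p ((splitLast K B p).symm (LinearMap.rTensor B f u)) =
      (splitLast K B (p + 1)).symm (LinearMap.rTensor B ((splitLast K B p).symm.toLinearMap ∘ₗ
        LinearMap.rTensor B f)
        ((TensorProduct.assoc K _ _ _).symm (LinearMap.lTensor _ Coalgebra.comul u))) := fun u => by
    induction u using TensorProduct.induction_on with
    | zero => simp
    | add x y hx hy => simp only [map_add, hx, hy]
    | tmul s a =>
      rw [LinearMap.rTensor_tmul, comulAt_last_splitLast_symm, LinearMap.lTensor_tmul]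
      generalize Coalgebra.comul (R := K) a = v
      induction v using TensorProduct.induction_on with
      | zero => simp
      | add x y hx hy => simp only [map_add, TensorProduct.tmul_add, hx, hy]
      | tmul c c' => simp
  have := hl (coactR (comulT K B q) (prodT K B q) t)
  rw [← coactR_coassoc (comulT_coassoc B q) (map_prodT_comulT q),
    LinearEquiv.symm_apply_apply, ← LinearMap.rTensor_comp_apply] at this
  exact this.symm

lemma coface_coface (p q i j : ℕ) (hij : i ≤ j) (hj : j ≤ p + 1) (f : T K B q →ₗ[K] T K B p) :
    coface K B (p + 1) q (j + 1) (coface K B p q i f) =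
      coface K B (p + 1) q i (coface K B p q j f) := by
  obtain _ | i := i
  · obtain _ | j := j
    · simpa [coface] using comulAt_zero_cofaceL p q f
    · obtain h | h := hj.lt_or_eq
      · have h' : j + 1 ≤ p := by omega
        simpa [coface, h'] using comulAt_succ_cofaceL p q j f
      · obtain rfl : j = p := by omega
        simpa [coface] using cofaceR_cofaceL j q f
  · obtain _ | j := j
    · omega
    · obtain h | h := hj.lt_or_eq
      · have h' : j + 1 ≤ p := by omega
        have h'' : i + 1 ≤ p := by omega
        have h3 : i ≤ p := by omega
        simp only [coface, h', h'', h3, add_le_add_iff_right, Nat.add_eq_zero_iff, one_ne_zero,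
          and_false, if_true, if_false, Nat.add_sub_cancel]
        exact LinearMap.ext fun t => comulAt_comulAt p i j (by omega) (f t)
      · obtain rfl : j = p := by omega
        obtain h | rfl := (show i ≤ j by omega).lt_or_eq
        · have h' : i + 1 ≤ j := h
          simpa [coface, h', h.le] using cofaceR_comulAt j q i h f
        · simpa [coface] using comulAt_last_cofaceR i q f

end Coface

/-- The alternating double sum over a family obeying the cosimplicial symmetry vanishes. -/
lemma alternating_double_sum_eq_zero {A : Type*} [AddCommGroup A] (n : ℕ) (a : ℕ → ℕ → A)
    (h : ∀ i j, i ≤ j → j < n → a (j + 1) i = a i j) :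
    ∑ j ∈ Finset.range (n + 1), ∑ i ∈ Finset.range n, ((-1 : ℤ) ^ (j + i)) • a j i = 0 := by
  rw [← Finset.sum_product']
  refine Finset.sum_involution
    (fun x _ => if x.2 < x.1 then (x.2, x.1 - 1) else (x.2 + 1, x.1)) ?_ ?_ ?_ ?_
  · rintro ⟨j, i⟩ hx
    simp only [Finset.mem_product, Finset.mem_range] at hx
    split_ifs with hij
    · obtain ⟨j, rfl⟩ := Nat.exists_eq_succ_of_ne_zero (Nat.ne_zero_of_lt hij)
      dsimp only at hij ⊢
      rw [Nat.succ_eq_add_one, Nat.add_sub_cancel, h i j (by omega) (by omega),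
        show j + 1 + i = i + j + 1 by ring, pow_succ]
      simp
    · dsimp only at hij ⊢
      rw [h j i (by omega) (by omega), show i + 1 + j = j + i + 1 by ring, pow_succ]
      simp
  · rintro ⟨j, i⟩ hx _
    split_ifs with hij <;> simp only [ne_eq, Prod.mk.injEq] at * <;> omega
  · rintro ⟨j, i⟩ hx
    simp only [Finset.mem_product, Finset.mem_range] at *
    split_ifs <;> constructor <;> dsimp only at * <;> omega
  · rintro ⟨j, i⟩ hx
    dsimp only
    by_cases hij : i < j
    · have h' : ¬ j - 1 < i := by omega
      simp only [hij, h', if_true, if_false, Prod.mk.injEq, and_true]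
      omega
    · have h' : j < i + 1 := by omega
      simp [hij, h']

/-- The alternating sums of cofaces of a cosimplicial module square to zero. -/
lemma alternating_coface_sum_comp_eq_zero {M N : Type*} [AddCommGroup M] [AddCommGroup N] (n : ℕ)
    (d : ℕ → M) (e : ℕ → M →+ N) (h : ∀ i j, i ≤ j → j < n → e (j + 1) (d i) = e i (d j)) :
    ∑ j ∈ Finset.range (n + 1), ((-1 : ℤ) ^ j) •
      e j (∑ i ∈ Finset.range n, ((-1 : ℤ) ^ i) • d i) = 0 := by
  rw [← alternating_double_sum_eq_zero n (fun j i => e j (d i)) h]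
  refine Finset.sum_congr rfl fun j _ => ?_
  rw [map_sum, Finset.smul_sum]
  refine Finset.sum_congr rfl fun i _ => ?_
  rw [map_zsmul, smul_smul, pow_add]

/-- For all `p, q ≥ 1`, the vertical differentials of the
Gerstenhaber–Schack bicomplex satisfy `δ_c^{p+1,q} ∘ δ_c^{p,q} = 0`. -/
theorem deltaCv_deltaCv (p q : ℕ) (hp : 1 ≤ p) (hq : 1 ≤ q)
    (f : T K B q →ₗ[K] T K B p) :
    deltaCv K B (p + 1) q (deltaCv K B p q f) = 0 := by
  rw [deltaCv_eq_sum, deltaCv_eq_sum]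
  exact alternating_coface_sum_comp_eq_zero (p + 2) (fun i => coface K B p q i f)
    (fun j => (coface K B (p + 1) q j).toAddMonoidHom)
    (fun i j hij hj => coface_coface p q i j hij (by omega) f)

end GBD
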